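/- arXiv:2407.02435 — 2 statements merged into one kernel-verified Lean document; each statement's English description precedes it below -/
import Mathlib

section
/- Let A be a real n×m matrix with columns a₁, …, a_m ∈ ℝⁿ, and let λ₁ ≥ λ₂ ≥ … ≥ λ_n ≥ 0 denote the eigenvalues of the real symmetric positive semidefinite matrix A Aᵀ, listed with multiplicity in decreasing order. Then for every k ≤ n and every orthonormal family S₁, …, S_k in ℝⁿ (with the standard inner product), Σ_{j=1}^{m} ‖ a_j − Σ_{i=1}^{k} ⟨S_i, a_j⟩ S_i ‖² ≥ Σ_{i=k+1}^{n} λ_i. -/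
open Matrix
open scoped RealInnerProductSpace

/-!
The snapshots `a j` enter only through their correlation operator `T = ∑ j, a j (a j)ᴴ`. By
Pythagoras the projection error onto an orthonormal family `S` is `tr T - ∑ l, ⟪S l, T (S l)⟫`, so
the bound is Ky Fan's maximum principle for `T`. In an eigenbasis `u`, the captured energy
`∑ l, ⟪S l, T (S l)⟫` is a sum of the eigenvalues with weights `∑ l, |⟪u i, S l⟫|²`, which are at
most `1` by Bessel and have total mass `k` by Parseval; such a weighted sum is largest when the mass
sits on the top `k` eigenvalues.
-/

open InnerProductSpace RCLike

section WeightedSum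

variable {ι R : Type*}

lemma exists_forall_mem_le_and_forall_notMem_le [Finite ι] [LinearOrder R] [Nonempty R]
    {f : ι → R} {s : Finset ι} (hs : ∀ i ∈ s, ∀ j ∉ s, f j ≤ f i) :
    ∃ c, (∀ i ∈ s, c ≤ f i) ∧ ∀ j ∉ s, f j ≤ c := by
  rcases s.eq_empty_or_nonempty with rfl | hne
  · obtain ⟨c, hc⟩ := (Set.finite_range f).bddAbove
    exact ⟨c, by simp, fun j _ ↦ hc ⟨j, rfl⟩⟩
  · obtain ⟨i, hi, hmin⟩ := s.exists_min_image f hne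
    exact ⟨f i, hmin, hs i hi⟩

lemma sum_mul_le_sum_of_sum_eq_card [Fintype ι] [CommRing R] [LinearOrder R]
    [IsStrictOrderedRing R] {f w : ι → R} {s : Finset ι} (hs : ∀ i ∈ s, ∀ j ∉ s, f j ≤ f i)
    (hw₀ : ∀ i, 0 ≤ w i) (hw₁ : ∀ i, w i ≤ 1) (hw : ∑ i, w i = s.card) :
    ∑ i, f i * w i ≤ ∑ i ∈ s, f i := by
  classical
  obtain ⟨c, hcs, hcsc⟩ := exists_forall_mem_le_and_forall_notMem_le hs
  -- Both sides have total weight `s.card`, so shifting `f` by `c` does not affect the comparison.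
  have hterm (i : ι) : (f i - c) * w i ≤ if i ∈ s then f i - c else 0 := by
    split_ifs with hi
    · exact mul_le_of_le_one_right (sub_nonneg.2 (hcs i hi)) (hw₁ i)
    · exact mul_nonpos_of_nonpos_of_nonneg (sub_nonpos.2 (hcsc i hi)) (hw₀ i)
  have hsum : ∑ i, (f i - c) * w i ≤ ∑ i ∈ s, (f i - c) := by
    simpa using Finset.sum_le_sum fun i (_ : i ∈ Finset.univ) ↦ hterm i
  simp only [sub_mul, Finset.sum_sub_distrib, ← Finset.mul_sum, hw, Finset.sum_const,
    nsmul_eq_mul] at hsum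
  linarith

end WeightedSum

section KyFan

variable {𝕜 E ι τ : Type*} [RCLike 𝕜] [NormedAddCommGroup E] [InnerProductSpace 𝕜 E]
  [Fintype ι] [Fintype τ] {T : E →ₗ[𝕜] E} {u : OrthonormalBasis ι 𝕜 E} {lam : ι → ℝ}

lemma re_inner_map_self_eq_sum_eigenvalue_mul (hT : ∀ i, T (u i) = (lam i : 𝕜) • u i) (x : E) :
    re ⟪x, T x⟫_𝕜 = ∑ i, lam i * ‖⟪u i, x⟫_𝕜‖ ^ 2 := by
  have hTx : T x = ∑ i, ⟪u i, x⟫_𝕜 • (lam i : 𝕜) • u i := by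
    conv_lhs => rw [← u.sum_repr' x]
    simp only [map_sum, map_smul, hT]
  simp only [hTx, inner_sum, inner_smul_right, map_sum]
  refine Finset.sum_congr rfl fun i _ ↦ ?_
  rw [mul_left_comm, ← inner_conj_symm x, RCLike.mul_conj]
  norm_cast

theorem sum_re_inner_map_self_le_sum_eigenvalues (hT : ∀ i, T (u i) = (lam i : 𝕜) • u i)
    {s : Finset ι} (hs : ∀ i ∈ s, ∀ j ∉ s, lam j ≤ lam i) {S : τ → E} (hS : Orthonormal 𝕜 S)
    (hcard : s.card = Fintype.card τ) :
    ∑ l, re ⟪S l, T (S l)⟫_𝕜 ≤ ∑ i ∈ s, lam i := by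
  have hbessel (i : ι) : ∑ l, ‖⟪u i, S l⟫_𝕜‖ ^ 2 ≤ 1 := by
    simpa [norm_inner_symm] using hS.sum_inner_products_le (u i) (s := Finset.univ)
  have hmass : ∑ i, ∑ l, ‖⟪u i, S l⟫_𝕜‖ ^ 2 = s.card := by
    rw [Finset.sum_comm]
    simp [u.sum_sq_norm_inner_right, hS.norm_eq_one, hcard]
  calc ∑ l, re ⟪S l, T (S l)⟫_𝕜
      = ∑ i, lam i * ∑ l, ‖⟪u i, S l⟫_𝕜‖ ^ 2 := by
        simp only [re_inner_map_self_eq_sum_eigenvalue_mul hT, Finset.mul_sum]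
        exact Finset.sum_comm
    _ ≤ ∑ i ∈ s, lam i :=
        sum_mul_le_sum_of_sum_eq_card hs (fun i ↦ by positivity) hbessel hmass

end KyFan

section Snapshots

variable {𝕜 E κ τ : Type*} [RCLike 𝕜] [SeminormedAddCommGroup E] [InnerProductSpace 𝕜 E]
  [Fintype κ] [Fintype τ]

lemma norm_sub_sum_inner_smul_sq {S : τ → E} (hS : Orthonormal 𝕜 S) (x : E) :
    ‖x - ∑ l, ⟪S l, x⟫_𝕜 • S l‖ ^ 2 = ‖x‖ ^ 2 - ∑ l, ‖⟪S l, x⟫_𝕜‖ ^ 2 := by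
  set p := ∑ l, ⟪S l, x⟫_𝕜 • S l with hp
  have hcross : re ⟪x, p⟫_𝕜 = ∑ l, ‖⟪S l, x⟫_𝕜‖ ^ 2 := by
    simp only [hp, inner_sum, inner_smul_right, map_sum, inner_mul_symm_re_eq_norm, norm_mul,
      norm_inner_symm x, sq]
  have hnorm : ‖p‖ ^ 2 = ∑ l, ‖⟪S l, x⟫_𝕜‖ ^ 2 := by
    rw [norm_sq_eq_re_inner (𝕜 := 𝕜), hS.inner_sum]
    simp only [RCLike.conj_mul, map_sum]
    norm_cast
  rw [norm_sub_sq (𝕜 := 𝕜), hcross, hnorm]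
  ring

variable (𝕜) in
/-- The correlation operator `x ↦ ∑ j, ⟪a j, x⟫ a j` of a finite family of snapshots `a`: the
basis-free form of the matrix `A Aᴴ` whose factor `A` has columns `a j`. -/
noncomputable def snapshotCorrelation (a : κ → E) : E →ₗ[𝕜] E :=
  ∑ j, (rankOne 𝕜 (a j) (a j)).toLinearMap

lemma snapshotCorrelation_apply (a : κ → E) (x : E) :
    snapshotCorrelation 𝕜 a x = ∑ j, ⟪a j, x⟫_𝕜 • a j := by
  simp [snapshotCorrelation]

lemma re_inner_snapshotCorrelation_self (a : κ → E) (x : E) :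
    re ⟪x, snapshotCorrelation 𝕜 a x⟫_𝕜 = ∑ j, ‖⟪x, a j⟫_𝕜‖ ^ 2 := by
  simp only [snapshotCorrelation_apply, inner_sum, inner_smul_right, map_sum,
    inner_mul_symm_re_eq_norm, norm_mul, norm_inner_symm x, sq]

lemma sum_norm_sub_sum_inner_smul_sq {S : τ → E} (hS : Orthonormal 𝕜 S) (a : κ → E) :
    ∑ j, ‖a j - ∑ l, ⟪S l, a j⟫_𝕜 • S l‖ ^ 2 =
      ∑ j, ‖a j‖ ^ 2 - ∑ l, re ⟪S l, snapshotCorrelation 𝕜 a (S l)⟫_𝕜 := by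
  simp only [norm_sub_sum_inner_smul_sq hS, re_inner_snapshotCorrelation_self,
    Finset.sum_sub_distrib]
  rw [Finset.sum_comm]

end Snapshots

section SnapshotEigenbasis

variable {𝕜 E ι κ τ : Type*} [RCLike 𝕜] [NormedAddCommGroup E] [InnerProductSpace 𝕜 E]
  [Fintype ι] [Fintype κ] [Fintype τ]
  {a : κ → E} {u : OrthonormalBasis ι 𝕜 E} {lam : ι → ℝ}

lemma sum_norm_sq_eq_sum_eigenvalues
    (hu : ∀ i, snapshotCorrelation 𝕜 a (u i) = (lam i : 𝕜) • u i) :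
    ∑ j, ‖a j‖ ^ 2 = ∑ i, lam i := by
  simp only [← u.sum_sq_norm_inner_right]
  rw [Finset.sum_comm]
  refine Finset.sum_congr rfl fun i _ ↦ ?_
  rw [← re_inner_snapshotCorrelation_self, hu, inner_smul_right, inner_self_eq_norm_sq_to_K]
  simp

theorem sum_compl_eigenvalues_le_sum_norm_sub_sum_inner_smul_sq [DecidableEq ι]
    (hu : ∀ i, snapshotCorrelation 𝕜 a (u i) = (lam i : 𝕜) • u i)
    {s : Finset ι} (hs : ∀ i ∈ s, ∀ j ∉ s, lam j ≤ lam i) {S : τ → E} (hS : Orthonormal 𝕜 S)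
    (hcard : s.card = Fintype.card τ) :
    ∑ i ∈ sᶜ, lam i ≤ ∑ j, ‖a j - ∑ l, ⟪S l, a j⟫_𝕜 • S l‖ ^ 2 := by
  rw [sum_norm_sub_sum_inner_smul_sq hS, sum_norm_sq_eq_sum_eigenvalues hu,
    ← Finset.sum_add_sum_compl s lam]
  linarith [sum_re_inner_map_self_le_sum_eigenvalues hu hs hS hcard]

end SnapshotEigenbasis

section Matrix

variable {𝕜 ι κ : Type*} [RCLike 𝕜] [Fintype ι] [Fintype κ]

lemma snapshotCorrelation_eq_toEuclideanLin [DecidableEq ι] {A : Matrix ι κ 𝕜}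
    {a : κ → EuclideanSpace 𝕜 ι} (ha : ∀ j i, a j i = A i j) :
    snapshotCorrelation 𝕜 a = (A * Aᴴ).toEuclideanLin := by
  ext x i
  have hcoord (j : κ) : ⟪a j, x⟫_𝕜 = (Aᴴ *ᵥ x.ofLp) j := by
    simp [PiLp.inner_apply, mulVec, dotProduct, ha, mul_comm]
  rw [toLpLin_apply, ← mulVec_mulVec]
  simp [snapshotCorrelation_apply, hcoord, mulVec_eq_sum (v := Aᴴ *ᵥ x.ofLp), ha]

theorem pod_projection_error_lower_bound_general [DecidableEq ι] {n k : ℕ} {A : Matrix ι κ 𝕜}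
    {lam : Fin n → ℝ} (hdec : Antitone lam) {σ : Fin n ≃ ι}
    (hσ : ∀ i, lam i = (isHermitian_mul_conjTranspose_self A).eigenvalues (σ i))
    {S : Fin k → EuclideanSpace 𝕜 ι} (hS : Orthonormal 𝕜 S)
    {a : κ → EuclideanSpace 𝕜 ι} (ha : ∀ j i, a j i = A i j) :
    ∑ i with k ≤ (i : Fin n).val, lam i ≤ ∑ j, ‖a j - ∑ l, ⟪S l, a j⟫_𝕜 • S l‖ ^ 2 := by
  set hA := isHermitian_mul_conjTranspose_self A
  have heigen (i : Fin n) : snapshotCorrelation 𝕜 a (hA.eigenvectorBasis.reindex σ.symm i) =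
      (lam i : 𝕜) • hA.eigenvectorBasis.reindex σ.symm i := by
    ext1
    simp [snapshotCorrelation_eq_toEuclideanLin ha, hA.mulVec_eigenvectorBasis, hσ]
  have hkn : k ≤ n := by
    simpa [Fintype.card_congr σ.symm] using hS.linearIndependent.fintype_card_le_finrank
  let top : Finset (Fin n) := {i | i.val < k}
  have hcard : top.card = Fintype.card (Fin k) := by
    simp [top, Fin.card_filter_val_lt, hkn]
  have htop : ∀ i ∈ top, ∀ j ∉ top, lam j ≤ lam i := by
    intro i hi j hj
    simp only [top, Finset.mem_filter_univ, not_lt] at hi hj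
    exact hdec (hi.le.trans hj)
  simpa [top] using
    sum_compl_eigenvalues_le_sum_norm_sub_sum_inner_smul_sq heigen htop hS hcard

end Matrix

/-- POD optimality lower bound: for any orthonormal family `S₁, …, S_k` in ℝⁿ,
the snapshot projection error is at least the tail sum `Σ_{i>k} λ_i` of the
decreasingly ordered eigenvalues of `A Aᵀ`. -/
theorem pod_projection_error_lower_bound
    (n m : ℕ) (A : Matrix (Fin n) (Fin m) ℝ)
    (hA : (A * Aᵀ).IsHermitian)
    (lam : Fin n → ℝ)
    (hdec : Antitone lam)
    (hnonneg : ∀ i, 0 ≤ lam i)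
    (hperm : ∃ σ : Equiv.Perm (Fin n), ∀ i, lam i = hA.eigenvalues (σ i))
    (k : ℕ) (hk : k ≤ n)
    (S : Fin k → EuclideanSpace ℝ (Fin n))
    (hS : Orthonormal ℝ S)
    (a : Fin m → EuclideanSpace ℝ (Fin n))
    (ha : ∀ j i, a j i = A i j) :
    ∑ i ∈ Finset.univ.filter (fun i : Fin n => k ≤ (i : ℕ)), lam i
      ≤ ∑ j : Fin m, ‖a j - ∑ i : Fin k, ⟪S i, a j⟫ • S i‖ ^ 2 := by
  obtain ⟨σ, hσ⟩ := hperm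
  exact pod_projection_error_lower_bound_general hdec hσ hS ha
end

section
/- Let M, χ ∈ ℝ^{3×3}, let f_d > 0, σ_{y0} ≥ 0, Y₀ ≥ 0, and let q_p, q_d, Y, λ̇_p, λ̇_d ∈ ℝ. Write M̃ = (1/f_d)·M, χ̃ = (1/f_d)·χ, q̃_p = (1/f_d)·q_p, let (·)′ denote the deviatoric part A′ = A − (tr A/3)·I, let A : B = tr(Aᵀ B) and ‖A‖ = sqrt(A : A), and assume M̃′ − χ̃′ ≠ 0. Define the flow quantities D_p = λ̇_p · sqrt(3/2) · (1/f_d) · (M̃′ − χ̃′)/‖M̃′ − χ̃′‖, ξ̇_p = λ̇_p / f_d, Ḋ = λ̇_d, ξ̇_d = λ̇_d, and the yield and damage loading functions Φ_p = sqrt(3/2)·‖M̃′ − χ̃′‖ − (σ_{y0} + q̃_p) and Φ_d = Y − (Y₀ + q_d). Assume the Karush–Kuhn–Tucker conditions λ̇_p ≥ 0, λ̇_d ≥ 0, λ̇_p·Φ_p = 0, λ̇_d·Φ_d = 0. Then (M − χ) : D_p − q_p·ξ̇_p − q_d·ξ̇_d + Y·Ḋ = λ̇_p·σ_{y0} + λ̇_d·Y₀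 ≥ 0. -/
open Matrix

/-!
The deviator is the projection onto trace-free matrices, self-adjoint for `A : B = tr(Aᵀ B)`, so a
stress contracted with the flow direction `A′ / ‖A′‖` yields `‖A′‖`: this is Euler's identity for
the norm of the deviator, which is homogeneous of degree one. Hence the plastic power is
`λ̇_p` times the equivalent stress, and complementarity trades the equivalent stress for
`σ_y0 + q̃_p` and the driving force `Y` for `Y₀ + q_d`. The hardening powers then cancel, and the
two thresholds remain.
-/

section Deviator

variable {n K : Type*} [Fintype n] [DecidableEq n] [Field K]

/-- The deviatoric part `A′ = A - (tr A / d) • 1` of a `d × d` matrix, as a linear map. -/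
def deviator : Matrix n n K →ₗ[K] Matrix n n K :=
  LinearMap.id - (traceLinearMap n K K).smulRight ((Fintype.card n : K)⁻¹ • (1 : Matrix n n K))

lemma deviator_apply (A : Matrix n n K) :
    deviator A = A - (trace A / Fintype.card n) • (1 : Matrix n n K) := by
  simp [deviator, smul_smul, div_eq_mul_inv]

lemma trace_deviator [CharZero K] (A : Matrix n n K) : trace (deviator A) = 0 := by
  cases isEmpty_or_nonempty n
  · exact trace_eq_zero_of_isEmpty _
  · simp [deviator_apply]

lemma trace_transpose_mul_deviator [CharZero K] (A B : Matrix n n K) :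
    trace (Aᵀ * deviator B) = trace ((deviator A)ᵀ * deviator B) := by
  simp only [deviator_apply A, transpose_sub, transpose_smul, transpose_one, sub_mul,
    smul_mul_assoc, one_mul, trace_sub, trace_smul, trace_deviator, smul_zero, sub_zero]

end Deviator

section Frobenius

open scoped Matrix.Norms.Frobenius

lemma trace_conjTranspose_mul_self_eq_frobenius_norm_sq {m n 𝕜 : Type*} [Fintype m] [Fintype n]
    [RCLike 𝕜] (A : Matrix m n 𝕜) : trace (Aᴴ * A) = (‖A‖ : 𝕜) ^ 2 := by
  have norm_sq : ‖A‖ ^ 2 = ∑ i, ∑ j, ‖A i j‖ ^ 2 := by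
    have sum_nonneg : 0 ≤ ∑ i, ∑ j, ‖A i j‖ ^ 2 := by positivity
    simp only [frobenius_norm_def, Real.rpow_two, ← Real.sqrt_eq_rpow, Real.sq_sqrt sum_nonneg]
  rw [← RCLike.ofReal_pow, norm_sq, Finset.sum_comm]
  simp [trace, mul_apply, RCLike.conj_mul]

lemma trace_transpose_mul_self_eq_frobenius_norm_sq {m n : Type*} [Fintype m] [Fintype n]
    (A : Matrix m n ℝ) : trace (Aᵀ * A) = ‖A‖ ^ 2 := by
  simpa using trace_conjTranspose_mul_self_eq_frobenius_norm_sq A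

lemma sqrt_trace_transpose_mul_self {m n : Type*} [Fintype m] [Fintype n] (A : Matrix m n ℝ) :
    √(trace (Aᵀ * A)) = ‖A‖ := by
  rw [trace_transpose_mul_self_eq_frobenius_norm_sq, Real.sqrt_sq (norm_nonneg A)]

variable {n : Type*} [Fintype n] [DecidableEq n]

lemma trace_transpose_mul_normalized_deviator {A : Matrix n n ℝ} (hA : deviator A ≠ 0) :
    trace (Aᵀ * (‖deviator A‖⁻¹ • deviator A)) = ‖deviator A‖ := by
  have hnorm : ‖deviator A‖ ≠ 0 := norm_ne_zero_iff.mpr hA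
  rw [mul_smul_comm, trace_smul, trace_transpose_mul_deviator,
    trace_transpose_mul_self_eq_frobenius_norm_sq, smul_eq_mul, sq, inv_mul_cancel_left₀ hnorm]

/-- The factor `f_d⁻¹` of the flow rule turns the nominal stress `S` into the effective one. -/
lemma trace_transpose_mul_effective_flow {S : Matrix n n ℝ} {fd : ℝ} (hS : deviator (fd⁻¹ • S) ≠ 0)
    (c : ℝ) :
    trace (Sᵀ * ((c * fd⁻¹ * ‖deviator (fd⁻¹ • S)‖⁻¹) • deviator (fd⁻¹ • S))) =
      c * ‖deviator (fd⁻¹ • S)‖ := by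
  calc trace (Sᵀ * ((c * fd⁻¹ * ‖deviator (fd⁻¹ • S)‖⁻¹) • deviator (fd⁻¹ • S)))
      = c * trace ((fd⁻¹ • S)ᵀ * (‖deviator (fd⁻¹ • S)‖⁻¹ • deviator (fd⁻¹ • S))) := by
        simp only [transpose_smul, smul_mul_assoc, mul_smul_comm, trace_smul, smul_eq_mul]
        ring
    _ = c * ‖deviator (fd⁻¹ • S)‖ := by rw [trace_transpose_mul_normalized_deviator hS]

theorem two_surface_reduced_dissipation_general
    (M χ : Matrix n n ℝ) (fd κ σy0 Y0 qp qd Y lp ld : ℝ) (hσ : 0 ≤ σy0) (hY0 : 0 ≤ Y0)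
    (N : Matrix n n ℝ) (hN : N = deviator (fd⁻¹ • M) - deviator (fd⁻¹ • χ)) (hNne : N ≠ 0)
    (hlp : 0 ≤ lp) (hld : 0 ≤ ld)
    (hKKTp : lp * (κ * ‖N‖ - (σy0 + fd⁻¹ * qp)) = 0) (hKKTd : ld * (Y - (Y0 + qd)) = 0) :
    trace ((M - χ)ᵀ * ((lp * κ * fd⁻¹ * ‖N‖⁻¹) • N)) - qp * (lp / fd) - qd * ld + Y * ld
        = lp * σy0 + ld * Y0 ∧
      0 ≤ lp * σy0 + ld * Y0 := by
  refine ⟨?_, by positivity⟩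
  have hN' : N = deviator (fd⁻¹ • (M - χ)) := by rw [hN, smul_sub, map_sub]
  have plastic_power : trace ((M - χ)ᵀ * ((lp * κ * fd⁻¹ * ‖N‖⁻¹) • N)) = lp * κ * ‖N‖ := by
    subst hN'
    exact trace_transpose_mul_effective_flow hNne (lp * κ)
  have equivalent_stress : lp * κ * ‖N‖ = lp * σy0 + qp * (lp / fd) := by
    linear_combination hKKTp
  have driving_force : Y * ld = ld * Y0 + qd * ld := by
    linear_combination hKKTd
  rw [plastic_power, equivalent_stress, driving_force]
  ring

end Frobenius

/-- Reduced dissipation inequality of the two-surface gradient-extended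
damage-plasticity model: with the associative flow rules and the
Karush–Kuhn–Tucker conditions, the Clausius–Duhem residual satisfies
`(M − χ) : D_p − q_p ξ̇_p − q_d ξ̇_d + Y Ḋ = λ̇_p σ_y0 + λ̇_d Y₀ ≥ 0`.
Here `A : B = tr(Aᵀ B)`, `‖A‖ = sqrt(A : A)`, the deviatoric part is
`A′ = A − (tr A/3) I`, and effective quantities are `(~·) = (·)/f_d`. -/
theorem two_surface_reduced_dissipation
    (M χ : Matrix (Fin 3) (Fin 3) ℝ)
    (fd σy0 Y0 qp qd Y lp ld : ℝ)
    (hfd : 0 < fd) (hσ : 0 ≤ σy0) (hY0 : 0 ≤ Y0)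
    (Mt χt : Matrix (Fin 3) (Fin 3) ℝ)
    (hMt : Mt = fd⁻¹ • M) (hχt : χt = fd⁻¹ • χ)
    (qpt : ℝ) (hqpt : qpt = fd⁻¹ * qp)
    -- `N = M̃′ − χ̃′`
    (N : Matrix (Fin 3) (Fin 3) ℝ)
    (hNdef : N = (Mt - (Matrix.trace Mt / 3) • (1 : Matrix (Fin 3) (Fin 3) ℝ))
                  - (χt - (Matrix.trace χt / 3) • (1 : Matrix (Fin 3) (Fin 3) ℝ)))
    (hNne : N ≠ 0)
    -- Frobenius norm `‖M̃′ − χ̃′‖`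
    (nrm : ℝ) (hnrm : nrm = Real.sqrt (Matrix.trace (Nᵀ * N)))
    -- associative flow rules
    (Dp : Matrix (Fin 3) (Fin 3) ℝ)
    (hDp : Dp = (lp * Real.sqrt (3 / 2) * fd⁻¹ * nrm⁻¹) • N)
    (ξp' ξd' D' : ℝ)
    (hξp : ξp' = lp / fd) (hD' : D' = ld) (hξd : ξd' = ld)
    -- yield and damage loading functions
    (Φp Φd : ℝ)
    (hΦp : Φp = Real.sqrt (3 / 2) * nrm - (σy0 + qpt))
    (hΦd : Φd = Y - (Y0 + qd))
    -- Karush–Kuhn–Tucker conditions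
    (hlp : 0 ≤ lp) (hld : 0 ≤ ld)
    (hKKTp : lp * Φp = 0) (hKKTd : ld * Φd = 0) :
    Matrix.trace ((M - χ)ᵀ * Dp) - qp * ξp' - qd * ξd' + Y * D'
        = lp * σy0 + ld * Y0 ∧
      0 ≤ lp * σy0 + ld * Y0 := by
  obtain rfl := hnrm.trans (sqrt_trace_transpose_mul_self N)
  subst hMt hχt hqpt hDp hξp hD' hξd hΦp hΦd
  have hN : N = deviator (fd⁻¹ • M) - deviator (fd⁻¹ • χ) := by
    simpa only [deviator_apply, Fintype.card_fin, Nat.cast_ofNat] using hNdef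
  exact two_surface_reduced_dissipation_general M χ fd √(3 / 2) σy0 Y0 qp qd Y lp _ hσ hY0 N hN
    hNne hlp hld hKKTp hKKTd
end
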